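/- In the setting of the approximating maps τ_n, let n₀ ≥ N satisfy a_{n₀} + D₁ < 1 and let n ≥ n₀. Then for every non-negative, non-increasing f ∈ L¹(I,λ) and every k ≥ 1, the k-th iterate of the Frobenius–Perron operator satisfies ess sup (P_{τ_n}^k f) ≤ (a_{n₀} + D₁)^k · ess sup f + (D / (1 − (a_{n₀} + D₁))) · ‖f‖₁. -/

import Mathlib

open MeasureTheory Set Filter

/-- Lebesgue measure on the unit interval `I = [0,1]`. -/
noncomputable def lam : MeasureTheory.Measure ℝ := MeasureTheory.volume.restrict (Set.Icc 0 1)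

/-- A piecewise convex map `τ` on `[0,1]` with countably many branches, whose partition
points form a strictly decreasing sequence `1 = a 0 > a 1 > ⋯` tending to `0`; on each
`[a (m+1), a m)` the map is continuous, convex and differentiable, vanishes at the left
endpoint, and has right derivative `d (m+1) = τ'(a (m+1)) > 0` there; there is `N ≥ 1`
with `D₁ = ∑_{m=N+1}^∞ 1/τ'(a m) < 1` and `C = ∑_{m=1}^∞ 1/τ'(a m) < ∞`. -/
structure PCApprox (τ : ℝ → ℝ) (a d : ℕ → ℝ) (N : ℕ) : Prop where
  mapsTo : Set.MapsTo τ (Set.Icc 0 1) (Set.Icc 0 1)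
  a_zero : a 0 = 1
  a_anti : StrictAnti a
  a_lim : Filter.Tendsto a Filter.atTop (nhds 0)
  cont : ∀ m : ℕ, ContinuousOn τ (Set.Ico (a (m+1)) (a m))
  conv : ∀ m : ℕ, ConvexOn ℝ (Set.Ico (a (m+1)) (a m)) τ
  diff : ∀ m : ℕ, ∀ x ∈ Set.Ico (a (m+1)) (a m),
    DifferentiableWithinAt ℝ τ (Set.Ico (a (m+1)) (a m)) x
  map_a : ∀ m : ℕ, τ (a (m+1)) = 0
  deriv_a : ∀ m : ℕ, HasDerivWithinAt τ (d (m+1)) (Set.Ici (a (m+1))) (a (m+1))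
  d_pos : ∀ m : ℕ, 0 < d (m+1)
  N_pos : 1 ≤ N
  sum_d : Summable fun m => 1 / d (m+1)
  D₁_lt : (∑' m : ℕ, 1 / d (m + N + 1)) < 1

/-- `D₁ = ∑_{m=N+1}^∞ 1/τ'(a m)`. -/
noncomputable def D₁ (d : ℕ → ℝ) (N : ℕ) : ℝ := ∑' m : ℕ, 1 / d (m + N + 1)

/-- `C = ∑_{m=1}^∞ 1/τ'(a m)`. -/
noncomputable def Cconst (d : ℕ → ℝ) : ℝ := ∑' m : ℕ, 1 / d (m + 1)

/-- `D = ∑_{m=1}^N 1/(a m · τ'(a m))`. -/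
noncomputable def Dconst (a d : ℕ → ℝ) (N : ℕ) : ℝ :=
  ∑ m ∈ Finset.range N, 1 / (a (m+1) * d (m+1))

/-- The approximating map `τ_n`: `τ_n x = x / a n` for `x < a n`, and `τ_n x = τ x`
for `a n ≤ x`. -/
noncomputable def tauN (τ : ℝ → ℝ) (a : ℕ → ℝ) (n : ℕ) : ℝ → ℝ :=
  fun x => if x < a n then x / a n else τ x

/-- Essential supremum (with respect to `λ` on `[0,1]`) of a real function, valued in `ℝ≥0∞`. -/
noncomputable def esssup (f : ℝ → ℝ) : ENNReal := essSup (fun x => ENNReal.ofReal (f x)) lam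


/-- Right endpoint of the sublevel set of a branch. -/
noncomputable def phi (τ : ℝ → ℝ) (a : ℕ → ℝ) (m : ℕ) (t : ℝ) : ℝ :=
  sSup {x | x ∈ Set.Ico (a (m+1)) (a m) ∧ τ x ≤ t}

section branch
variable {τ : ℝ → ℝ} {a d : ℕ → ℝ} {N : ℕ}

theorem a_pos' (h : PCApprox τ a d N) (m : ℕ) : 0 < a m :=
  lt_of_le_of_lt (h.a_anti.antitone.le_of_tendsto h.a_lim (m+1)) (h.a_anti (Nat.lt_succ_self m))

theorem a_le_one (h : PCApprox τ a d N) (m : ℕ) : a m ≤ 1 := by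
  rw [← h.a_zero]; exact h.a_anti.antitone (Nat.zero_le m)

theorem left_mem (h : PCApprox τ a d N) (m : ℕ) {t : ℝ} (ht : 0 ≤ t) :
    a (m+1) ∈ {x | x ∈ Set.Ico (a (m+1)) (a m) ∧ τ x ≤ t} :=
  ⟨⟨le_rfl, h.a_anti (Nat.lt_succ_self m)⟩, by rw [h.map_a]; exact ht⟩

theorem bdd_S (τ : ℝ → ℝ) (a : ℕ → ℝ) (m : ℕ) (t : ℝ) :
    BddAbove {x | x ∈ Set.Ico (a (m+1)) (a m) ∧ τ x ≤ t} :=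
  ⟨a m, fun _ hx => hx.1.2.le⟩

theorem le_phi {m : ℕ} {t x : ℝ} (hx : x ∈ Set.Ico (a (m+1)) (a m)) (hxt : τ x ≤ t) :
    x ≤ phi τ a m t := le_csSup (bdd_S τ a m t) ⟨hx, hxt⟩

theorem a_le_phi (h : PCApprox τ a d N) (m : ℕ) {t : ℝ} (ht : 0 ≤ t) :
    a (m+1) ≤ phi τ a m t := le_csSup (bdd_S τ a m t) (left_mem h m ht)

theorem phi_le (h : PCApprox τ a d N) (m : ℕ) {t : ℝ} (ht : 0 ≤ t) :
    phi τ a m t ≤ a m := csSup_le ⟨_, left_mem h m ht⟩ fun _ hx => hx.1.2.le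

theorem phi_le_slope (h : PCApprox τ a d N) (m : ℕ) {t : ℝ} (ht : 0 ≤ t) :
    phi τ a m t ≤ a (m+1) + t / d (m+1) := by
  refine csSup_le ⟨_, left_mem h m ht⟩ fun x hx => ?_
  have hd := h.d_pos m
  rcases hx.1.1.eq_or_lt with e | hlt
  · rw [← e]; have := div_nonneg ht hd.le; linarith
  · have := (h.conv m).le_slope_of_hasDerivWithinAt_Ioi (left_mem h m ht).1 hx.1 hlt
      ((h.deriv_a m).mono Set.Ioi_subset_Ici_self)
    rw [slope_def_field, h.map_a, le_div_iff₀ (by linarith)] at this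
    have h2 : x - a (m+1) ≤ t / d (m+1) := by
      rw [le_div_iff₀ hd]; nlinarith [hx.2]
    linarith

theorem phi_mono (h : PCApprox τ a d N) (m : ℕ) {s t : ℝ} (hs : 0 ≤ s) (hst : s ≤ t) :
    phi τ a m s ≤ phi τ a m t :=
  csSup_le ⟨_, left_mem h m hs⟩ fun _ hx => le_phi hx.1 (hx.2.trans hst)

theorem phi_concave (h : PCApprox τ a d N) (m : ℕ) :
    ConcaveOn ℝ (Set.Icc 0 1) (phi τ a m) := by
  refine ⟨convex_Icc 0 1, ?_⟩
  intro s hs t ht p q hp hq hpq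
  refine le_of_forall_pos_le_add fun ε hε => ?_
  obtain ⟨x, hx, hxs⟩ := exists_lt_of_lt_csSup ⟨_, left_mem h m hs.1⟩
    (show phi τ a m s - ε < sSup _ from sub_lt_self _ hε)
  obtain ⟨y, hy, hyt⟩ := exists_lt_of_lt_csSup ⟨_, left_mem h m ht.1⟩
    (show phi τ a m t - ε < sSup _ from sub_lt_self _ hε)
  have h1 := (h.conv m).2 hx.1 hy.1 hp hq hpq
  have h2 := (h.conv m).1 hx.1 hy.1 hp hq hpq
  have h3 : p • x + q • y ≤ phi τ a m (p • s + q • t) := by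
    refine le_phi h2 (h1.trans ?_)
    simp only [smul_eq_mul]
    exact add_le_add (mul_le_mul_of_nonneg_left hx.2 hp) (mul_le_mul_of_nonneg_left hy.2 hq)
  simp only [smul_eq_mul] at h3 ⊢
  have h4 := mul_le_mul_of_nonneg_left hxs.le hp
  have h5 := mul_le_mul_of_nonneg_left hyt.le hq
  have : p * ε + q * ε = ε := by rw [← add_mul, hpq, one_mul]
  linarith

theorem tau_le_of_lt_phi (h : PCApprox τ a d N) (m : ℕ) {t x : ℝ} (ht : 0 ≤ t)
    (h1 : a (m+1) ≤ x) (h2 : x < phi τ a m t) : x ∈ Set.Ico (a (m+1)) (a m) ∧ τ x ≤ t := by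
  obtain ⟨y, hy, hxy⟩ := exists_lt_of_lt_csSup ⟨_, left_mem h m ht⟩ h2
  have hc := ((h.conv m).convex_le t).ordConnected
  exact hc.out (left_mem h m ht) hy ⟨h1, hxy.le⟩

theorem exists_branch (h : PCApprox τ a d N) (n : ℕ) {x : ℝ} (h1 : a n ≤ x) (h2 : x < 1) :
    ∃ m < n, x ∈ Set.Ico (a (m+1)) (a m) := by
  induction n with
  | zero => rw [h.a_zero] at h1; linarith
  | succ k ih =>
    by_cases hk : a k ≤ x
    · obtain ⟨m, hm, hx⟩ := ih hk
      exact ⟨m, by omega, hx⟩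
    · exact ⟨k, by omega, h1, not_le.mp hk⟩

theorem preimage_ae (h : PCApprox τ a d N) (n : ℕ) {t : ℝ} (ht : t ∈ Set.Icc (0:ℝ) 1) :
    (tauN τ a n) ⁻¹' (Set.Icc 0 t) =ᵐ[lam]
      (Set.Ioc 0 (a n * t) ∪ ⋃ m ∈ Finset.range n, Set.Ioc (a (m+1)) (phi τ a m t) : Set ℝ) := by
  have hc : (Set.range a ∪ Set.range (fun m => phi τ a m t) ∪ {0} : Set ℝ).Countable :=
    ((Set.countable_range _).union (Set.countable_range _)).union (Set.countable_singleton _)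
  have h0 : lam (Set.range a ∪ Set.range (fun m => phi τ a m t) ∪ {0}) = 0 :=
    Measure.restrict_le_self.absolutelyContinuous (hc.measure_zero volume)
  have hI : ∀ᵐ x ∂lam, x ∈ Set.Icc (0:ℝ) 1 := ae_restrict_mem measurableSet_Icc
  have hn := a_pos' h n
  filter_upwards [hI, measure_eq_zero_iff_ae_notMem.mp h0] with x hx hxn
  simp only [Set.mem_union, Set.mem_range, Set.mem_singleton_iff, not_or, not_exists] at hxn
  obtain ⟨⟨hxa, hxp⟩, hx0⟩ := hxn
  have hx1 : x < 1 := lt_of_le_of_ne hx.2 fun e => hxa 0 (by rw [h.a_zero, e])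
  have hx0' : 0 < x := lt_of_le_of_ne hx.1 (Ne.symm hx0)
  apply propext
  change x ∈ tauN τ a n ⁻¹' Set.Icc 0 t ↔ x ∈ (_ : Set ℝ)
  simp only [Set.mem_preimage, Set.mem_union, Set.mem_iUnion, Finset.mem_range, Set.mem_Icc,
    Set.mem_Ioc, tauN, exists_prop]
  by_cases hxn : x < a n
  · rw [if_pos hxn, div_le_iff₀ hn]
    constructor
    · rintro ⟨_, h2⟩
      exact Or.inl ⟨hx0', by linarith⟩
    · rintro (h2 | ⟨m, hm, h2, _⟩)
      · exact ⟨by positivity, by linarith [h2.2]⟩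
      · have := h.a_anti.antitone (show m + 1 ≤ n by omega)
        linarith
  · rw [if_neg hxn]
    push Not at hxn
    constructor
    · rintro ⟨_, h2⟩
      obtain ⟨m, hm, hxm⟩ := exists_branch h n hxn hx1
      exact Or.inr ⟨m, hm, lt_of_le_of_ne hxm.1 (hxa _), le_phi hxm h2⟩
    · intro h2
      refine ⟨(h.mapsTo hx).1, ?_⟩
      rcases h2 with h2 | ⟨m, hm, h2, h3⟩
      · have : a n * t ≤ a n := mul_le_of_le_one_right hn.le ht.2
        exact absurd (le_antisymm hxn (h2.2.trans this)) (hxa n)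
      · exact (tau_le_of_lt_phi h m ht.1 h2.le (lt_of_le_of_ne h3 (Ne.symm (hxp m)))).2

end branch

/-- Distribution function of `g`. -/
noncomputable def cdfI (g : ℝ → ℝ) (t : ℝ) : ℝ := ∫ x in Set.Ioc 0 t, g x ∂lam

theorem cdfI_sub {g : ℝ → ℝ} (hg : Integrable g lam) {s t : ℝ} (hs : 0 ≤ s) (hst : s ≤ t) :
    cdfI g t - cdfI g s = ∫ x in Set.Ioc s t, g x ∂lam := by
  unfold cdfI
  rw [← Set.Ioc_union_Ioc_eq_Ioc hs hst, setIntegral_union _ measurableSet_Ioc hg.integrableOn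
    hg.integrableOn]
  · ring
  · exact Set.Ioc_disjoint_Ioc_of_le le_rfl

theorem cdfI_zero (g : ℝ → ℝ) : cdfI g 0 = 0 := by simp [cdfI]

instance : NullSingletonClass lam := by unfold lam; infer_instance
instance : IsFiniteMeasure lam := by unfold lam; infer_instance

theorem setIntegral_lam (g : ℝ → ℝ) {s t : ℝ} (hs : 0 ≤ s) (ht : t ≤ 1) :
    ∫ x in Set.Ioc s t, g x ∂lam = ∫ x in Set.Ioc s t, g x := by
  unfold lam
  rw [Measure.restrict_restrict measurableSet_Ioc, Set.inter_eq_left.mpr]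
  intro x hx
  exact ⟨hs.trans hx.1.le, hx.2.trans ht⟩

theorem step_formula {τ : ℝ → ℝ} {a d : ℕ → ℝ} {N : ℕ} (h : PCApprox τ a d N) (n : ℕ)
    {g g' : ℝ → ℝ} (hg : Integrable g lam)
    (hit : ∀ A : Set ℝ, MeasurableSet A → A ⊆ Set.Icc 0 1 →
      ∫ x in A, g' x ∂lam = ∫ x in (tauN τ a n) ⁻¹' A, g x ∂lam)
    {t : ℝ} (ht : t ∈ Set.Icc (0:ℝ) 1) :
    cdfI g' t = cdfI g (a n * t) +
      ∑ m ∈ Finset.range n, (cdfI g (phi τ a m t) - cdfI g (a (m+1))) := by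
  have h1 := hit (Set.Icc 0 t) measurableSet_Icc (Set.Icc_subset_Icc_right ht.2)
  rw [integral_Icc_eq_integral_Ioc] at h1
  unfold cdfI
  have hn := a_pos' h n
  rw [h1, setIntegral_congr_set (preimage_ae h n ht), setIntegral_union,
    integral_biUnion_finset]
  · congr 1
    refine Finset.sum_congr rfl fun m _ => ?_
    exact (cdfI_sub hg (a_pos' h _).le (a_le_phi h m ht.1)).symm
  · intro _ _; exact measurableSet_Ioc
  · intro i _ j _ hij
    have := h.a_anti.antitone.pairwise_disjoint_on_Ioc_succ hij
    exact this.mono (Set.Ioc_subset_Ioc_right (phi_le h _ ht.1))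
      (Set.Ioc_subset_Ioc_right (phi_le h _ ht.1))
  · intro _ _; exact hg.integrableOn
  · simp only [Set.disjoint_iUnion_right]
    intro m hm
    have := h.a_anti.antitone (show m + 1 ≤ n by simpa using hm)
    refine Set.Ioc_disjoint_Ioc_of_le (le_trans (mul_le_of_le_one_right hn.le ht.2) this)
  · exact Finset.measurableSet_biUnion _ fun _ _ => measurableSet_Ioc
  · exact hg.integrableOn
  · exact hg.integrableOn

theorem slope_bound {F : ℝ → ℝ} (hF : ConcaveOn ℝ (Set.Icc 0 1) F) (h0 : F 0 = 0)
    {s t : ℝ} (hs : 0 < s) (hst : s ≤ t) (ht : t ≤ 1) : F t - F s ≤ F s / s * (t - s) := by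
  rcases hst.eq_or_lt with rfl | hlt
  · simp
  · have := hF.slope_anti_adjacent (x := 0) (y := s) (z := t) ⟨le_rfl, zero_le_one⟩
      ⟨by linarith, ht⟩ hs hlt
    rw [h0, sub_zero, sub_zero, div_le_iff₀ (by linarith)] at this
    exact this

theorem step_concave {τ : ℝ → ℝ} {a d : ℕ → ℝ} {N : ℕ} (h : PCApprox τ a d N) (n : ℕ)
    {F F' : ℝ → ℝ} (hF : ConcaveOn ℝ (Set.Icc 0 1) F) (hm : MonotoneOn F (Set.Icc 0 1))
    (heq : ∀ t ∈ Set.Icc (0:ℝ) 1, F' t = F (a n * t) +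
      ∑ m ∈ Finset.range n, (F (phi τ a m t) - F (a (m+1)))) :
    ConcaveOn ℝ (Set.Icc 0 1) F' ∧ MonotoneOn F' (Set.Icc 0 1) := by
  have hn := a_pos' h n
  have hn1 := a_le_one h n
  have hp : ∀ m, ∀ t ∈ Set.Icc (0:ℝ) 1, phi τ a m t ∈ Set.Icc (0:ℝ) 1 := fun m t ht =>
    ⟨(a_pos' h _).le.trans (a_le_phi h m ht.1), (phi_le h m ht.1).trans (a_le_one h _)⟩
  have hq : ∀ t ∈ Set.Icc (0:ℝ) 1, a n * t ∈ Set.Icc (0:ℝ) 1 := fun t ht =>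
    ⟨mul_nonneg hn.le ht.1, mul_le_one₀ hn1 ht.1 ht.2⟩
  constructor
  · refine ⟨convex_Icc 0 1, ?_⟩
    intro s hs t ht p q hp0 hq0 hpq
    have hst := (convex_Icc (0:ℝ) 1) hs ht hp0 hq0 hpq
    rw [heq _ hst, heq s hs, heq t ht, smul_add, smul_add, Finset.smul_sum, Finset.smul_sum,
      add_add_add_comm, ← Finset.sum_add_distrib]
    refine add_le_add ?_ (Finset.sum_le_sum fun m _ => ?_)
    · refine (hF.2 (hq s hs) (hq t ht) hp0 hq0 hpq).trans (le_of_eq ?_)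
      congr 1; simp only [smul_eq_mul]; ring
    · have h1 := hF.2 (hp m s hs) (hp m t ht) hp0 hq0 hpq
      have h2 := hm ((convex_Icc (0:ℝ) 1) (hp m s hs) (hp m t ht) hp0 hq0 hpq) (hp m _ hst)
        ((phi_concave h m).2 hs ht hp0 hq0 hpq)
      simp only [smul_eq_mul] at h1 h2 ⊢
      have : p * F (a (m+1)) + q * F (a (m+1)) = F (a (m+1)) := by rw [← add_mul, hpq, one_mul]
      linarith
  · intro s hs t ht hst
    rw [heq s hs, heq t ht]
    refine add_le_add (hm (hq s hs) (hq t ht) (mul_le_mul_of_nonneg_left hst hn.le))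
      (Finset.sum_le_sum fun m _ => sub_le_sub_right
        (hm (hp m s hs) (hp m t ht) (phi_mono h m hs.1 hst)) _)

theorem step_bound {τ : ℝ → ℝ} {a d : ℕ → ℝ} {N : ℕ} (h : PCApprox τ a d N) (n n₀ : ℕ)
    (hn₀ : N ≤ n₀) (hn : n₀ ≤ n)
    {F F' : ℝ → ℝ} (hF : ConcaveOn ℝ (Set.Icc 0 1) F) (hm : MonotoneOn F (Set.Icc 0 1))
    (h0 : F 0 = 0) {L : ℝ} (hL0 : 0 ≤ L) (hL : ∀ t ∈ Set.Icc (0:ℝ) 1, F t ≤ L * t)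
    (heq : ∀ t ∈ Set.Icc (0:ℝ) 1, F' t = F (a n * t) +
      ∑ m ∈ Finset.range n, (F (phi τ a m t) - F (a (m+1)))) :
    ∀ t ∈ Set.Icc (0:ℝ) 1, F' t ≤ ((a n₀ + D₁ d N) * L + Dconst a d N * F 1) * t := by
  intro t ht
  have hnp := a_pos' h n
  have hn1 := a_le_one h n
  have hterm : ∀ m, F (phi τ a m t) - F (a (m+1)) ≤ F (a (m+1)) / a (m+1) * (t / d (m+1)) := by
    intro m
    have hap := a_pos' h (m+1)
    have hFa : 0 ≤ F (a (m+1)) := by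
      rw [← h0]; exact hm ⟨le_rfl, zero_le_one⟩ ⟨hap.le, a_le_one h _⟩ hap.le
    refine (slope_bound hF h0 hap (a_le_phi h m ht.1)
      ((phi_le h m ht.1).trans (a_le_one h _))).trans ?_
    exact mul_le_mul_of_nonneg_left (by linarith [phi_le_slope h m ht.1]) (by positivity)
  rw [heq t ht]
  have hb0 : F (a n * t) ≤ a n₀ * L * t := by
    refine (hL _ ⟨mul_nonneg hnp.le ht.1, mul_le_one₀ hn1 ht.1 ht.2⟩).trans ?_
    have := mul_le_mul_of_nonneg_right (h.a_anti.antitone hn) (mul_nonneg hL0 ht.1)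
    linarith
  have hsplit : n = N + (n - N) := by omega
  have hb1 : ∑ m ∈ Finset.range N, (F (phi τ a m t) - F (a (m+1))) ≤
      Dconst a d N * F 1 * t := by
    unfold Dconst
    rw [Finset.sum_mul, Finset.sum_mul]
    refine Finset.sum_le_sum fun m _ => (hterm m).trans ?_
    have hap := a_pos' h (m+1)
    have hd := h.d_pos m
    have : F (a (m+1)) ≤ F 1 := hm ⟨hap.le, a_le_one h _⟩ ⟨zero_le_one, le_rfl⟩ (a_le_one h _)
    calc F (a (m+1)) / a (m+1) * (t / d (m+1)) ≤ F 1 / a (m+1) * (t / d (m+1)) := by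
          have := ht.1
          gcongr
      _ = _ := by field_simp
  have hb2 : ∑ m ∈ Finset.range (n - N), (F (phi τ a (N + m) t) - F (a (N + m+1))) ≤
      D₁ d N * L * t := by
    have hs : Summable fun m => 1 / d (m + N + 1) := (summable_nat_add_iff N).mpr h.sum_d
    have h1 : ∑ m ∈ Finset.range (n - N), 1 / d (m + N + 1) ≤ D₁ d N :=
      hs.sum_le_tsum _ fun m _ => one_div_nonneg.mpr (h.d_pos (m+N)).le
    refine le_trans ?_ (mul_le_mul_of_nonneg_right (mul_le_mul_of_nonneg_right h1 hL0) ht.1)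
    rw [Finset.sum_mul, Finset.sum_mul]
    refine Finset.sum_le_sum fun m _ => (hterm _).trans ?_
    rw [Nat.add_comm N m]
    have hap := a_pos' h (m+N+1)
    have hd := h.d_pos (m+N)
    have h2 := hL _ ⟨hap.le, a_le_one h (m+N+1)⟩
    have h3 : F (a (m+N+1)) / a (m+N+1) ≤ L := by rwa [div_le_iff₀ hap]
    calc F (a (m+N+1)) / a (m+N+1) * (t / d (m+N+1)) ≤ L * (t / d (m+N+1)) := by
          have := ht.1
          gcongr
      _ = _ := by field_simp
  rw [hsplit, Finset.sum_range_add, ← hsplit]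
  linarith

theorem ae_le_of_cdf {g : ℝ → ℝ} (hg : Integrable g lam) {L : ℝ}
    (hF : ConcaveOn ℝ (Set.Icc 0 1) (cdfI g)) 
    (hL : ∀ t ∈ Set.Icc (0:ℝ) 1, cdfI g t ≤ L * t) : ∀ᵐ x ∂lam, g x ≤ L := by
  have hii : IntervalIntegrable g volume 0 1 := by
    rw [intervalIntegrable_iff_integrableOn_Icc_of_le zero_le_one]; exact hg
  have hlip : ∀ s t, 0 < s → s ≤ t → t ≤ 1 → cdfI g t - cdfI g s ≤ L * (t - s) := by
    intro s t hs hst ht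
    refine (slope_bound hF (cdfI_zero g) hs hst ht).trans
      (mul_le_mul_of_nonneg_right ?_ (by linarith))
    rw [div_le_iff₀ hs]
    exact hL s ⟨hs.le, hst.trans ht⟩
  have hd := hii.ae_hasDerivAt_integral
  have hI : ∀ᵐ x ∂lam, x ∈ Set.Ioo (0:ℝ) 1 := by
    unfold lam
    rw [← restrict_Ioo_eq_restrict_Icc]
    exact ae_restrict_mem measurableSet_Ioo
  filter_upwards [hI, Measure.restrict_le_self.absolutelyContinuous.ae_le hd] with x hx hdx
  have h1 := hdx (by rw [Set.uIcc_of_le zero_le_one]; exact ⟨hx.1.le, hx.2.le⟩) 0 (by simp)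
  have h2 := h1.hasDerivWithinAt (s := Set.Ioi x)
  rw [hasDerivWithinAt_iff_tendsto_slope' (by simp)] at h2
  refine le_of_tendsto h2 ?_
  filter_upwards [Ioo_mem_nhdsGT hx.2] with y hy
  rw [slope_def_field, div_le_iff₀ (by linarith [hy.1])]
  have e : ∀ z, 0 ≤ z → z ≤ 1 → ∫ w in (0:ℝ)..z, g w = cdfI g z := by
    intro z hz hz1
    rw [intervalIntegral.integral_of_le hz, cdfI, setIntegral_lam g le_rfl hz1]
  rw [e y (by linarith [hx.1, hy.1]) hy.2.le, e x hx.1.le hx.2.le]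
  exact hlip x y hx.1 hy.1.le hy.2.le

theorem base_facts {f : ℝ → ℝ} (hf : Integrable f lam)
    (h0 : ∀ x ∈ Set.Icc (0:ℝ) 1, 0 ≤ f x) (hm : AntitoneOn f (Set.Icc 0 1)) :
    ConcaveOn ℝ (Set.Icc 0 1) (cdfI f) ∧ MonotoneOn (cdfI f) (Set.Icc 0 1) := by
  have hvol : ∀ (c : ℝ) {s t : ℝ}, 0 ≤ s → s ≤ t → t ≤ 1 →
      ∫ x in Set.Ioc s t, c ∂lam = c * (t - s) := by
    intro c s t hs hst ht
    rw [setIntegral_lam (fun _ => c) hs ht]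
    simp [hst, mul_comm]
  constructor
  · refine concaveOn_of_slope_anti_adjacent (convex_Icc 0 1) ?_
    intro x y z hx hz hxy hyz
    have hy : y ∈ Set.Icc (0:ℝ) 1 := ⟨hx.1.trans hxy.le, hyz.le.trans hz.2⟩
    rw [cdfI_sub hf hy.1 hyz.le, cdfI_sub hf hx.1 hxy.le]
    trans f y
    · rw [div_le_iff₀ (by linarith), ← hvol (f y) hy.1 hyz.le hz.2]
      refine setIntegral_mono_on hf.integrableOn (integrable_const _).integrableOn
        measurableSet_Ioc fun w hw => ?_
      exact hm hy ⟨hy.1.trans hw.1.le, hw.2.trans hz.2⟩ hw.1.le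
    · rw [le_div_iff₀ (by linarith), ← hvol (f y) hx.1 hxy.le hy.2]
      refine setIntegral_mono_on (integrable_const _).integrableOn hf.integrableOn
        measurableSet_Ioc fun w hw => ?_
      exact hm ⟨hx.1.trans hw.1.le, hw.2.trans hy.2⟩ hy hw.2
  · intro s hs t ht hst
    rw [← sub_nonneg, cdfI_sub hf hs.1 hst]
    exact setIntegral_nonneg measurableSet_Ioc fun w hw =>
      h0 w ⟨hs.1.trans hw.1.le, hw.2.trans ht.2⟩

theorem base_bound {f : ℝ → ℝ} (hf : Integrable f lam) {L : ℝ} (hL : ∀ᵐ x ∂lam, f x ≤ L) :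
    ∀ t ∈ Set.Icc (0:ℝ) 1, cdfI f t ≤ L * t := by
  intro t ht
  have : ∫ x in Set.Ioc 0 t, L ∂lam = L * t := by
    rw [setIntegral_lam (fun _ => L) le_rfl ht.2]
    simp [ht.1, mul_comm]
  rw [← this]
  refine setIntegral_mono_ae hf.integrableOn (integrable_const _).integrableOn hL

/-- Let `n₀ ≥ N` satisfy `a n₀ + D₁ < 1` and let `n ≥ n₀`. For every non-negative,
non-increasing `f ∈ L¹` and every `k ≥ 1`, the `k`-th iterate of the Frobenius–Perron
operator of `τ_n` (realized as a sequence `g` of versions with `g 0 = f` and `g (k+1)` a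
version of `P_{τ_n} (g k)`) satisfies
`ess sup (P_{τ_n}^k f) ≤ (a n₀ + D₁)^k · ess sup f + (D / (1 − (a n₀ + D₁))) · ‖f‖₁`. -/
theorem stmt9 (τ : ℝ → ℝ) (a d : ℕ → ℝ) (N : ℕ)
    (hτ : PCApprox τ a d N) (n₀ : ℕ) (hn₀ : N ≤ n₀) (hcontr : a n₀ + D₁ d N < 1)
    (n : ℕ) (hn : n₀ ≤ n)
    (f : ℝ → ℝ) (g : ℕ → ℝ → ℝ)
    (hg0 : g 0 = f)
    (hint : ∀ k : ℕ, MeasureTheory.Integrable (g k) lam)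
    (hf_nonneg : ∀ x ∈ Set.Icc (0:ℝ) 1, 0 ≤ f x)
    (hf_mono : AntitoneOn f (Set.Icc 0 1))
    (hiter : ∀ k : ℕ, ∀ A : Set ℝ, MeasurableSet A → A ⊆ Set.Icc 0 1 →
      ∫ x in A, g (k+1) x ∂lam = ∫ x in (tauN τ a n) ⁻¹' A, g k x ∂lam) :
    ∀ k : ℕ, 1 ≤ k →
      esssup (g k) ≤ ENNReal.ofReal ((a n₀ + D₁ d N) ^ k) * esssup f
        + ENNReal.ofReal ((Dconst a d N / (1 - (a n₀ + D₁ d N))) * ∫ x, |f x| ∂lam) := by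
  have hI : ∀ᵐ x ∂lam, x ∈ Set.Icc (0:ℝ) 1 := ae_restrict_mem measurableSet_Icc
  have hfi : Integrable f lam := hg0 ▸ hint 0
  -- the essential supremum of `f` is finite
  have hfin : esssup f ≠ ⊤ := by
    refine ne_top_of_le_ne_top (ENNReal.ofReal_ne_top (r := f 0)) ?_
    refine essSup_le_of_ae_le _ ?_
    filter_upwards [hI] with x hx
    exact ENNReal.ofReal_le_ofReal (hf_mono ⟨le_rfl, zero_le_one⟩ hx hx.1)
  set L := (esssup f).toReal with hLdef
  have hL0 : 0 ≤ L := ENNReal.toReal_nonneg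
  have hfL : ∀ᵐ x ∂lam, f x ≤ L := by
    filter_upwards [ENNReal.ae_le_essSup (μ := lam) (fun x => ENNReal.ofReal (f x))] with x hx
    exact (ENNReal.ofReal_le_iff_le_toReal hfin).mp hx
  set α := a n₀ + D₁ d N with hα
  set M := ∫ x, |f x| ∂lam with hM
  have hα0 : 0 ≤ α := add_nonneg (a_pos' hτ n₀).le
    (tsum_nonneg fun m => one_div_nonneg.mpr (hτ.d_pos (m+N)).le)
  have hM0 : 0 ≤ M := integral_nonneg fun _ => abs_nonneg _
  have hD0 : 0 ≤ Dconst a d N := Finset.sum_nonneg fun m _ =>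
    one_div_nonneg.mpr (mul_nonneg (a_pos' hτ _).le (hτ.d_pos m).le)
  have h1α : 0 < 1 - α := by linarith
  have hR0 : 0 ≤ Dconst a d N / (1 - α) * M := by positivity
  have hone : ∀ u : ℝ → ℝ, cdfI u 1 = ∫ x, u x ∂lam := by
    intro u
    rw [cdfI, ← integral_Icc_eq_integral_Ioc]
    unfold lam
    rw [Measure.restrict_restrict measurableSet_Icc, Set.inter_self]
  have hmass : ∀ k, cdfI (g k) 1 = M := by
    intro k
    induction k with
    | zero =>
      rw [hone, hg0]
      refine integral_congr_ae ?_
      filter_upwards [hI] with x hx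
      rw [abs_of_nonneg (hf_nonneg x hx)]
    | succ k ih =>
      rw [← ih, hone, hone]
      have h1 := hiter k (Set.Icc 0 1) measurableSet_Icc le_rfl
      have huniv : (Set.Icc (0:ℝ) 1) =ᵐ[lam] (Set.univ : Set ℝ) := by
        rw [eventuallyEq_univ]; exact hI
      have h2 : tauN τ a n ⁻¹' (Set.Icc (0:ℝ) 1) =ᵐ[lam] (Set.univ : Set ℝ) := by
        rw [eventuallyEq_univ]
        filter_upwards [hI] with x hx
        have hp := a_pos' hτ n
        simp only [Set.mem_preimage, tauN]
        split_ifs with hlt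
        · exact ⟨div_nonneg hx.1 hp.le, (div_le_one hp).mpr hlt.le⟩
        · exact hτ.mapsTo hx
      rw [setIntegral_congr_set h2, setIntegral_congr_set huniv, setIntegral_univ,
        setIntegral_univ] at h1
      exact h1
  have key : ∀ k, ConcaveOn ℝ (Set.Icc 0 1) (cdfI (g k)) ∧
      MonotoneOn (cdfI (g k)) (Set.Icc 0 1) ∧
      ∀ t ∈ Set.Icc (0:ℝ) 1,
        cdfI (g k) t ≤ (α ^ k * L + Dconst a d N / (1 - α) * M) * t := by
    intro k
    induction k with
    | zero =>
      rw [hg0]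
      obtain ⟨h1, h2⟩ := base_facts hfi hf_nonneg hf_mono
      refine ⟨h1, h2, fun t ht => (base_bound hfi hfL t ht).trans ?_⟩
      refine mul_le_mul_of_nonneg_right ?_ ht.1
      rw [pow_zero, one_mul]; linarith
    | succ k ih =>
      obtain ⟨h1, h2, h3⟩ := ih
      have heq := fun t ht => step_formula hτ n (hint k) (hiter k) (t := t) ht
      obtain ⟨c1, c2⟩ := step_concave hτ n h1 h2 heq
      refine ⟨c1, c2, fun t ht => ?_⟩
      have := step_bound hτ n n₀ hn₀ hn h1 h2 (cdfI_zero _) (by positivity) h3 heq t ht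
      refine this.trans (le_of_eq ?_)
      rw [hmass k, ← hα]
      field_simp
      ring
  intro k _
  obtain ⟨h1, _, h3⟩ := key k
  have hae := ae_le_of_cdf (hint k) h1 h3
  have hfinal : esssup (g k) ≤ ENNReal.ofReal (α ^ k * L + Dconst a d N / (1 - α) * M) := by
    refine essSup_le_of_ae_le _ ?_
    filter_upwards [hae] with x hx
    exact ENNReal.ofReal_le_ofReal hx
  refine hfinal.trans (le_of_eq ?_)
  rw [ENNReal.ofReal_add (by positivity) hR0, ENNReal.ofReal_mul (by positivity),
    ENNReal.ofReal_toReal hfin]
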